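/- Let s, d be positive integers. For u ∈ W^{s,2}(𝕋ᵈ) with ∇u ∈ L^∞(𝕋ᵈ) and v ∈ W^{s-1,2}(𝕋ᵈ) ∩ L^∞(𝕋ᵈ), and any multi-index α with |α| ≤ s, the commutator estimate ‖∂^α(uv) - u ∂^α v‖_{L²} ≤ c(s,d)(‖∇u‖_{L^∞} ‖∇^{s-1} v‖_{L²} + ‖v‖_{L^∞} ‖∇^s u‖_{L²}) holds. -/

import Mathlib

open Set MeasureTheory
open scoped ENNReal

/-- A function on `ℝᵈ` is `ℤᵈ`-periodic (representing a function on the flat torus `𝕋ᵈ`). -/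
def IsTorusPeriodic {d : ℕ} {X : Type*} (u : EuclideanSpace ℝ (Fin d) → X) : Prop :=
  ∀ (x : EuclideanSpace ℝ (Fin d)) (k : Fin d → ℤ),
    u (x + (WithLp.equiv 2 (Fin d → ℝ)).symm (fun i => (k i : ℝ))) = u x

/-- A fundamental domain `[0,1)ᵈ` of the flat torus `𝕋ᵈ`. -/
def TorusDomain (d : ℕ) : Set (EuclideanSpace ℝ (Fin d)) :=
  {x | ∀ i, x i ∈ Set.Ico (0 : ℝ) 1}

/-!
Subtracting the constant `u x` from `u` leaves all derivatives of positive order unchanged, so the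
commutator at `x` is the Leibniz expansion of `∂^k (u v)` without the terms in which `u` is not
differentiated. Each remaining product `∂^(i+1) u · ∂^j v` with `i + j = m` is estimated by Hölder
in `L^(2m/i)` and `L^(2m/j)`. Integrating `∫ |∂g|^p` by parts gives the Gagliardo–Nirenberg
inequality `‖∂g‖² ≲ ‖g‖ ‖∂²g‖` between neighbouring exponents, which says that the resulting
sequence of bounds is log-convex in `i` up to a constant, hence controlled by its endpoints
`‖∇u‖_∞ ‖∇^m v‖₂` and `‖v‖_∞ ‖∇^(m+1) u‖₂`. On the torus a derivative vanishes somewhere on every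
closed coordinate line, so Poincaré's inequality raises the order `m` to `s - 1`; for `m = 0` the
inequality is applied to the product `∂ₗu · v` itself.
-/

section Periodic

variable {d : ℕ} {X F : Type*} [NormedAddCommGroup F]

/-- Lebesgue measure on the fundamental domain `[0,1)ᵈ`: integrating a periodic function against it
is integrating over the torus. -/
noncomputable abbrev torusMeasure (d : ℕ) : Measure (EuclideanSpace ℝ (Fin d)) :=
  volume.restrict (TorusDomain d)

/-- The lattice `ℤᵈ ⊆ ℝᵈ` of periods, as the span of the standard basis so that `ZSpan` applies. -/
noncomputable abbrev torusLattice (d : ℕ) : Submodule ℤ (EuclideanSpace ℝ (Fin d)) :=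
  Submodule.span ℤ (Set.range (EuclideanSpace.basisFun (Fin d) ℝ).toBasis)

namespace TorusDomain

lemma eq_fundamentalDomain (d : ℕ) :
    TorusDomain d = ZSpan.fundamentalDomain (EuclideanSpace.basisFun (Fin d) ℝ).toBasis := by
  ext x
  simp [ZSpan.mem_fundamentalDomain, TorusDomain]

lemma isAddFundamentalDomain (d : ℕ) :
    IsAddFundamentalDomain (torusLattice d) (TorusDomain d) volume := by
  rw [eq_fundamentalDomain]
  exact ZSpan.isAddFundamentalDomain _ _

instance : VAddInvariantMeasure (torusLattice d) (EuclideanSpace ℝ (Fin d)) volume :=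
  inferInstanceAs (VAddInvariantMeasure (torusLattice d).toAddSubgroup _ _)

lemma isBounded (d : ℕ) : Bornology.IsBounded (TorusDomain d) := by
  rw [eq_fundamentalDomain]
  exact ZSpan.fundamentalDomain_isBounded _

instance : Fact (volume (TorusDomain d) < ⊤) := ⟨(isBounded d).measure_lt_top⟩

end TorusDomain

namespace IsTorusPeriodic

lemma comp_left {Y : Type*} {f : EuclideanSpace ℝ (Fin d) → X} (hf : IsTorusPeriodic f)
    (φ : X → Y) : IsTorusPeriodic fun x ↦ φ (f x) :=
  fun x k ↦ congrArg φ (hf x k)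

lemma mul {f g : EuclideanSpace ℝ (Fin d) → ℝ} (hf : IsTorusPeriodic f) (hg : IsTorusPeriodic g) :
    IsTorusPeriodic fun x ↦ f x * g x :=
  fun x k ↦ congrArg₂ (· * ·) (hf x k) (hg x k)

protected lemma iteratedFDeriv [NormedSpace ℝ F] {f : EuclideanSpace ℝ (Fin d) → F}
    (hf : IsTorusPeriodic f) (n : ℕ) : IsTorusPeriodic (iteratedFDeriv ℝ n f) := fun x k ↦ by
  simp only [← iteratedFDeriv_comp_add_right, hf _ k]

lemma fderiv_apply [NormedSpace ℝ F] {f : EuclideanSpace ℝ (Fin d) → F} (hf : IsTorusPeriodic f)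
    (e : EuclideanSpace ℝ (Fin d)) : IsTorusPeriodic fun x ↦ fderiv ℝ f x e := fun x k ↦ by
  simp only [← fderiv_comp_add_right, hf _ k]

lemma vadd {f : EuclideanSpace ℝ (Fin d) → X} (hf : IsTorusPeriodic f)
    (g : torusLattice d) (x : EuclideanSpace ℝ (Fin d)) : f (g +ᵥ x) = f x := by
  choose k hk using (Module.Basis.mem_span_iff_repr_mem ℤ _ g.1).1 g.2
  have hg : g.1 = (WithLp.equiv 2 (Fin d → ℝ)).symm fun i ↦ (k i : ℝ) := by
    ext i
    simpa using (hk i).symm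
  rw [← hf x k, ← hg, add_comm]
  rfl

lemma periodic_single {f : EuclideanSpace ℝ (Fin d) → X} (hf : IsTorusPeriodic f) (l : Fin d) :
    Function.Periodic f (EuclideanSpace.single l 1) := fun x ↦ by
  have hl : EuclideanSpace.single l 1 ∈ torusLattice d := Submodule.subset_span ⟨l, by simp⟩
  rw [add_comm]
  exact hf.vadd ⟨_, hl⟩ x

lemma exists_norm_le {f : EuclideanSpace ℝ (Fin d) → F} (hf : IsTorusPeriodic f)
    (hc : Continuous f) : ∃ C, ∀ x, ‖f x‖ ≤ C := by
  obtain ⟨C, hC⟩ :=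
    (TorusDomain.isBounded d).isCompact_closure.exists_bound_of_continuousOn hc.continuousOn
  refine ⟨C, fun x ↦ ?_⟩
  rw [← hf.vadd (-ZSpan.floor (EuclideanSpace.basisFun (Fin d) ℝ).toBasis x) x]
  refine hC _ (subset_closure ?_)
  rw [TorusDomain.eq_fundamentalDomain]
  exact (ZSpan.vadd_mem_fundamentalDomain _ _ x).2 rfl

lemma memLp {f : EuclideanSpace ℝ (Fin d) → F} (hf : IsTorusPeriodic f) (hc : Continuous f)
    (p : ℝ≥0∞) : MemLp f p (torusMeasure d) := by
  obtain ⟨C, hC⟩ := hf.exists_norm_le hc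
  exact .of_bound hc.aestronglyMeasurable C (.of_forall hC)

lemma integrable {f : EuclideanSpace ℝ (Fin d) → F} (hf : IsTorusPeriodic f) (hc : Continuous f) :
    Integrable f (torusMeasure d) :=
  memLp_one_iff_integrable.1 (hf.memLp hc 1)

lemma lintegral_add_right {f : EuclideanSpace ℝ (Fin d) → ℝ≥0∞} (hf : IsTorusPeriodic f)
    (a : EuclideanSpace ℝ (Fin d)) :
    ∫⁻ x, f (x + a) ∂torusMeasure d = ∫⁻ x, f x ∂torusMeasure d := by
  have hD := TorusDomain.isAddFundamentalDomain d
  rw [hD.setLIntegral_eq (hD.vadd_of_comm a) f hf.vadd, ← Set.image_vadd,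
    ← (measurePreserving_vadd a volume).setLIntegral_comp_emb (measurableEmbedding_const_vadd a)]
  simp only [vadd_eq_add, add_comm]

lemma integral_add_right [NormedSpace ℝ F] {f : EuclideanSpace ℝ (Fin d) → F}
    (hf : IsTorusPeriodic f) (a : EuclideanSpace ℝ (Fin d)) :
    ∫ x, f (x + a) ∂torusMeasure d = ∫ x, f x ∂torusMeasure d := by
  have hD := TorusDomain.isAddFundamentalDomain d
  rw [hD.setIntegral_eq (hD.vadd_of_comm a) hf.vadd, ← Set.image_vadd,
    (measurePreserving_vadd a volume).setIntegral_image_emb (measurableEmbedding_const_vadd a)]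
  simp only [vadd_eq_add, add_comm]

end IsTorusPeriodic

end Periodic

section Line

variable {E F : Type*} [NormedAddCommGroup E] [NormedSpace ℝ E] [NormedAddCommGroup F]
  [NormedSpace ℝ F] {f : E → F}

lemma hasDerivAt_comp_add_smul (hf : Differentiable ℝ f) (x e : E) (t : ℝ) :
    HasDerivAt (fun t : ℝ ↦ f (x + t • e)) (fderiv ℝ f (x + t • e) e) t := by
  have hline : HasDerivAt (fun t : ℝ ↦ x + t • e) e t := by
    simpa using ((hasDerivAt_id t).smul_const e).const_add x
  exact (hf _).hasFDerivAt.comp_hasDerivAt t hline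

lemma integral_fderiv_add_smul [CompleteSpace F] (hf : ContDiff ℝ 1 f) (x e : E) (a b : ℝ) :
    ∫ t in a..b, fderiv ℝ f (x + t • e) e = f (x + b • e) - f (x + a • e) := by
  have : Continuous (fderiv ℝ f) := hf.continuous_fderiv one_ne_zero
  exact intervalIntegral.integral_eq_sub_of_hasDerivAt
    (fun t _ ↦ hasDerivAt_comp_add_smul (hf.differentiable one_ne_zero) x e t)
    (Continuous.intervalIntegrable (by fun_prop) _ _)

lemma enorm_le_lintegral_enorm_fderiv_add_smul [CompleteSpace F] (hf : ContDiff ℝ 1 f) {x e : E}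
    (hz : ∃ t ∈ Icc (0 : ℝ) 1, f (x + t • e) = 0) :
    ‖f x‖ₑ ≤ ∫⁻ t in Ioc (0 : ℝ) 1, ‖fderiv ℝ f (x + t • e) e‖ₑ := by
  obtain ⟨t, ht, hft⟩ := hz
  have hint := integral_fderiv_add_smul hf x e 0 t
  rw [hft, zero_smul, add_zero, zero_sub, intervalIntegral.integral_of_le ht.1] at hint
  rw [← enorm_neg, ← hint]
  exact (enorm_integral_le_lintegral_enorm _).trans
    (lintegral_mono_set (Ioc_subset_Ioc_right ht.2))

lemma exists_fderiv_add_smul_eq_zero {f : E → ℝ} {e : E} (hf : Differentiable ℝ f)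
    (hper : Function.Periodic f e) (x : E) :
    ∃ t ∈ Icc (0 : ℝ) 1, fderiv ℝ f (x + t • e) e = 0 := by
  have hderiv := hasDerivAt_comp_add_smul hf x e
  obtain ⟨t, ht, hft⟩ := exists_hasDerivAt_eq_zero (zero_lt_one' ℝ)
    (fun t _ ↦ (hderiv t).continuousAt.continuousWithinAt) (by simp [hper x])
    (fun t _ ↦ hderiv t)
  exact ⟨t, Ioo_subset_Icc_self ht, hft⟩

end Line

section TorusCalculus

variable {d : ℕ} {F : Type*} [NormedAddCommGroup F] [NormedSpace ℝ F] [CompleteSpace F]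

lemma integral_fderiv_apply_eq_zero {f : EuclideanSpace ℝ (Fin d) → F} (hf : ContDiff ℝ 1 f)
    (hper : IsTorusPeriodic f) (e : EuclideanSpace ℝ (Fin d)) :
    ∫ x, fderiv ℝ f x e ∂torusMeasure d = 0 := by
  have : Continuous (fderiv ℝ f) := hf.continuous_fderiv one_ne_zero
  have hper' := hper.fderiv_apply e
  obtain ⟨C, hC⟩ := hper'.exists_norm_le (by fun_prop)
  have hint : Integrable (Function.uncurry fun (t : ℝ) x ↦ fderiv ℝ f (x + t • e) e)
      ((volume.restrict (uIoc 0 1)).prod (torusMeasure d)) := by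
    rw [uIoc_of_le zero_le_one]
    refine .of_bound (Continuous.aestronglyMeasurable ?_) C (.of_forall fun _ ↦ hC _)
    simp only [Function.uncurry_def]
    fun_prop
  calc ∫ x, fderiv ℝ f x e ∂torusMeasure d
      = ∫ t in (0 : ℝ)..1, ∫ x, fderiv ℝ f (x + t • e) e ∂torusMeasure d := by
        simp [hper'.integral_add_right]
    _ = ∫ x, (∫ t in (0 : ℝ)..1, fderiv ℝ f (x + t • e) e) ∂torusMeasure d :=
        intervalIntegral_integral_swap hint
    _ = ∫ x, (f (x + e) - f x) ∂torusMeasure d := by simp [integral_fderiv_add_smul hf]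
    _ = 0 := by
        rw [integral_sub, hper.integral_add_right, sub_self]
        · exact IsTorusPeriodic.integrable (fun x k ↦ by rw [add_right_comm, hper]) (by fun_prop)
        · exact hper.integrable hf.continuous

lemma integral_mul_fderiv_apply {f g : EuclideanSpace ℝ (Fin d) → ℝ} (hf : ContDiff ℝ 1 f)
    (hg : ContDiff ℝ 1 g) (hfper : IsTorusPeriodic f) (hgper : IsTorusPeriodic g)
    (e : EuclideanSpace ℝ (Fin d)) :
    ∫ x, f x * fderiv ℝ g x e ∂torusMeasure d = -∫ x, g x * fderiv ℝ f x e ∂torusMeasure d := by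
  have : Continuous (fderiv ℝ f) := hf.continuous_fderiv one_ne_zero
  have : Continuous (fderiv ℝ g) := hg.continuous_fderiv one_ne_zero
  have hprod := integral_fderiv_apply_eq_zero (hf.mul hg) (hfper.mul hgper) e
  rw [eq_neg_iff_add_eq_zero, ← hprod, ← integral_add
    ((hfper.mul (hgper.fderiv_apply e)).integrable (by fun_prop))
    ((hgper.mul (hfper.fderiv_apply e)).integrable (by fun_prop))]
  refine integral_congr_ae (.of_forall fun x ↦ ?_)
  simp [fderiv_fun_mul (hf.differentiable one_ne_zero x) (hg.differentiable one_ne_zero x)]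

lemma eLpNorm_le_eLpNorm_fderiv_apply {f : EuclideanSpace ℝ (Fin d) → F} (hf : ContDiff ℝ 1 f)
    (hper : IsTorusPeriodic f) {e : EuclideanSpace ℝ (Fin d)}
    (hz : ∀ x, ∃ t ∈ Icc (0 : ℝ) 1, f (x + t • e) = 0) {p : ℝ≥0∞} (hp : 1 ≤ p) (hp_top : p ≠ ⊤) :
    eLpNorm f p (torusMeasure d) ≤ eLpNorm (fun x ↦ fderiv ℝ f x e) p (torusMeasure d) := by
  lift p to NNReal using hp_top
  have hp0 : p ≠ 0 := (zero_lt_one.trans_le (by exact_mod_cast hp)).ne'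
  have hppos : (0 : ℝ) < p := by positivity
  have : Continuous (fderiv ℝ f) := hf.continuous_fderiv one_ne_zero
  have hunit : IsProbabilityMeasure (volume.restrict (Ioc (0 : ℝ) 1)) := ⟨by simp⟩
  have hpointwise (x) : ‖f x‖ₑ ^ (p : ℝ) ≤
      ∫⁻ t in Ioc (0 : ℝ) 1, ‖fderiv ℝ f (x + t • e) e‖ₑ ^ (p : ℝ) := by
    rw [← eLpNorm_nnreal_pow_eq_lintegral hp0]
    gcongr
    calc ‖f x‖ₑ ≤ eLpNorm (fun t : ℝ ↦ fderiv ℝ f (x + t • e) e) 1 (volume.restrict (Ioc 0 1)) := by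
          rw [eLpNorm_one_eq_lintegral_enorm]
          exact enorm_le_lintegral_enorm_fderiv_add_smul hf (hz x)
      _ ≤ _ := eLpNorm_le_eLpNorm_of_exponent_le hp (Continuous.aestronglyMeasurable (by fun_prop))
  rw [← ENNReal.rpow_le_rpow_iff hppos, eLpNorm_nnreal_pow_eq_lintegral hp0,
    eLpNorm_nnreal_pow_eq_lintegral hp0]
  calc ∫⁻ x, ‖f x‖ₑ ^ (p : ℝ) ∂torusMeasure d
      ≤ ∫⁻ x, (∫⁻ t in Ioc (0 : ℝ) 1, ‖fderiv ℝ f (x + t • e) e‖ₑ ^ (p : ℝ)) ∂torusMeasure d :=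
        lintegral_mono hpointwise
    _ = ∫⁻ t in Ioc (0 : ℝ) 1, ∫⁻ x, ‖fderiv ℝ f (x + t • e) e‖ₑ ^ (p : ℝ) ∂torusMeasure d := by
        refine lintegral_lintegral_swap (Continuous.aemeasurable ?_)
        simp only [Function.uncurry_def]
        exact ENNReal.continuous_rpow_const.comp (Continuous.enorm (by fun_prop))
    _ = ∫⁻ x, ‖fderiv ℝ f x e‖ₑ ^ (p : ℝ) ∂torusMeasure d := by
        simp [((hper.fderiv_apply e).comp_left fun y ↦ ‖y‖ₑ ^ (p : ℝ)).lintegral_add_right]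

end TorusCalculus

section SignedPower

variable {a : ℝ}

lemma hasDerivAt_abs_rpow_mul_self (ha : 0 < a) (t : ℝ) :
    HasDerivAt (fun t : ℝ ↦ |t| ^ a * t) ((a + 1) * |t| ^ a) t := by
  rcases eq_or_ne t 0 with rfl | ht
  · have hcont : Continuous fun t : ℝ ↦ |t| ^ a := continuous_abs.rpow_const fun _ ↦ .inr ha.le
    have hslope : slope (fun t : ℝ ↦ |t| ^ a * t) 0 =ᶠ[nhdsWithin 0 {0}ᶜ] fun t ↦ |t| ^ a := by
      filter_upwards [self_mem_nhdsWithin] with t (ht : t ≠ 0)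
      simp [slope_def_field, ht]
    rw [hasDerivAt_iff_tendsto_slope, abs_zero, Real.zero_rpow ha.ne', mul_zero]
    simpa [Real.zero_rpow ha.ne'] using
      ((hcont.tendsto 0).mono_left nhdsWithin_le_nhds).congr' hslope.symm
  · have hpow := (hasDerivAt_abs ht).rpow_const (p := a) (.inl (abs_ne_zero.2 ht))
    refine (hpow.fun_mul (hasDerivAt_id' t)).congr_deriv ?_
    have hsplit : |t| ^ a = |t| ^ (a - 1) * |t| := by
      rw [← Real.rpow_add_one (abs_ne_zero.2 ht), sub_add_cancel]
    have hsign : (SignType.sign t : ℝ) * t = |t| := sign_mul_self t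
    linear_combination a * |t| ^ (a - 1) * hsign - a * hsplit

lemma contDiff_abs_rpow_mul_self (ha : 0 < a) : ContDiff ℝ 1 fun t : ℝ ↦ |t| ^ a * t := by
  have hderiv : deriv (fun t : ℝ ↦ |t| ^ a * t) = fun t ↦ (a + 1) * |t| ^ a :=
    funext fun t ↦ (hasDerivAt_abs_rpow_mul_self ha t).deriv
  refine contDiff_one_iff_deriv.2
    ⟨fun t ↦ (hasDerivAt_abs_rpow_mul_self ha t).differentiableAt, ?_⟩
  rw [hderiv]
  exact continuous_const.mul (continuous_abs.rpow_const fun _ ↦ .inr ha.le)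

end SignedPower

section GagliardoNirenberg

lemma lintegral_enorm_rpow_mul_enorm_mul_le {α : Type*} {mα : MeasurableSpace α} {μ : Measure α}
    {f g h : α → ℝ} (hf : AEStronglyMeasurable f μ) (hg : AEStronglyMeasurable g μ)
    (hh : AEStronglyMeasurable h μ) {a : ℝ} (ha : 0 < a) {q r : ℝ≥0∞}
    (hqr : q⁻¹ + r⁻¹ = ENNReal.ofReal (2 / (a + 2))) :
    ∫⁻ x, ‖h x‖ₑ ^ a * (‖f x‖ₑ * ‖g x‖ₑ) ∂μ ≤
      eLpNorm h (ENNReal.ofReal (a + 2)) μ ^ a * (eLpNorm f q μ * eLpNorm g r μ) := by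
  have hfg : ENNReal.HolderTriple q r (ENNReal.ofReal ((a + 2) / 2)) := ⟨by
    rw [hqr, ← ENNReal.ofReal_inv_of_pos (by positivity), inv_div]⟩
  have hhfg : ENNReal.HolderTriple (ENNReal.ofReal ((a + 2) / a)) (ENNReal.ofReal ((a + 2) / 2))
      1 := ⟨by
    rw [← ENNReal.ofReal_inv_of_pos (by positivity), ← ENNReal.ofReal_inv_of_pos (by positivity),
      ← ENNReal.ofReal_add (by positivity) (by positivity), inv_one, ← ENNReal.ofReal_one]
    congr 1
    field_simp⟩
  have hpow : eLpNorm (fun x ↦ ‖h x‖ ^ a) (ENNReal.ofReal ((a + 2) / a)) μ =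
      eLpNorm h (ENNReal.ofReal (a + 2)) μ ^ a := by
    rw [eLpNorm_norm_rpow _ ha, ← ENNReal.ofReal_mul (by positivity), div_mul_cancel₀ _ ha.ne']
  calc ∫⁻ x, ‖h x‖ₑ ^ a * (‖f x‖ₑ * ‖g x‖ₑ) ∂μ
      = eLpNorm ((fun x ↦ ‖h x‖ ^ a) • (f • g)) 1 μ := by
        simp [eLpNorm_one_eq_lintegral_enorm, enorm_mul, Real.enorm_rpow_of_nonneg, ha.le]
    _ ≤ eLpNorm (fun x ↦ ‖h x‖ ^ a) (ENNReal.ofReal ((a + 2) / a)) μ *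
          eLpNorm (f • g) (ENNReal.ofReal ((a + 2) / 2)) μ :=
        eLpNorm_smul_le_mul_eLpNorm (hf.smul hg)
          (hh.norm.aemeasurable.pow_const a).aestronglyMeasurable
    _ ≤ eLpNorm h (ENNReal.ofReal (a + 2)) μ ^ a * (eLpNorm f q μ * eLpNorm g r μ) := by
        rw [hpow]
        gcongr
        exact eLpNorm_smul_le_mul_eLpNorm hg hf

lemma sq_le_of_rpow_add_two_le {X Y : ℝ≥0∞} (hX : X ≠ ⊤) {a : ℝ} (h : X ^ (a + 2) ≤ X ^ a * Y) :
    X ^ 2 ≤ Y := by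
  rcases eq_or_ne X 0 with rfl | hX0
  · simp
  · rwa [ENNReal.rpow_add _ _ hX0 hX, ENNReal.rpow_ofNat,
      ENNReal.mul_le_mul_iff_right (by simp [hX0, hX]) (by simp [hX0, hX])] at h

variable {d : ℕ} {g : EuclideanSpace ℝ (Fin d) → ℝ} {a : ℝ}

lemma eLpNorm_rpow_eq_enorm_integral {α : Type*} {mα : MeasurableSpace α} {μ : Measure α}
    {h : α → ℝ} (ha : 0 < a) (hh : MemLp h (ENNReal.ofReal (a + 2)) μ) :
    eLpNorm h (ENNReal.ofReal (a + 2)) μ ^ (a + 2) = ‖∫ x, |h x| ^ a * h x * h x ∂μ‖ₑ := by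
  have hpower (x) : |h x| ^ a * h x * h x = ‖h x‖ ^ (a + 2) := by
    rw [Real.norm_eq_abs, Real.rpow_add_of_nonneg (abs_nonneg _) ha.le zero_le_two,
      Real.rpow_two, sq_abs]
    ring
  have hp : (ENNReal.ofReal (a + 2)).toReal = a + 2 := ENNReal.toReal_ofReal (by positivity)
  simp only [hpower]
  rw [hh.eLpNorm_eq_integral_rpow_norm (by positivity) ENNReal.ofReal_ne_top, hp,
    Real.enorm_of_nonneg (by positivity), ENNReal.ofReal_rpow_of_nonneg (by positivity)
      (by positivity), Real.rpow_inv_rpow (by positivity) (by positivity)]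

-- Integrate by parts in `∫ |∂ₑg| ^ a ∂ₑg · ∂ₑg`, moving the last derivative off `g`.
lemma eLpNorm_fderiv_apply_rpow_le (hg : ContDiff ℝ 2 g) (hper : IsTorusPeriodic g)
    (e : EuclideanSpace ℝ (Fin d)) (ha : 0 < a) :
    eLpNorm (fun x ↦ fderiv ℝ g x e) (ENNReal.ofReal (a + 2)) (torusMeasure d) ^ (a + 2) ≤
      ENNReal.ofReal (a + 1) * ∫⁻ x, ‖fderiv ℝ g x e‖ₑ ^ a *
        (‖g x‖ₑ * ‖fderiv ℝ (fun y ↦ fderiv ℝ g y e) x e‖ₑ) ∂torusMeasure d := by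
  set h := fun x ↦ fderiv ℝ g x e
  have hh : ContDiff ℝ 1 h := (hg.fderiv_right le_rfl).clm_apply contDiff_const
  have hhper : IsTorusPeriodic h := hper.fderiv_apply e
  have hparts := integral_mul_fderiv_apply ((contDiff_abs_rpow_mul_self ha).comp hh)
    (hg.of_le one_le_two) (hhper.comp_left fun t ↦ |t| ^ a * t) hper e
  have hderiv (x) : fderiv ℝ ((fun t : ℝ ↦ |t| ^ a * t) ∘ h) x e =
      (a + 1) * |h x| ^ a * fderiv ℝ h x e := by
    rw [(hasDerivAt_abs_rpow_mul_self ha _).comp_hasFDerivAt x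
      (hh.differentiable one_ne_zero x).hasFDerivAt |>.fderiv]
    simp
  calc eLpNorm h (ENNReal.ofReal (a + 2)) (torusMeasure d) ^ (a + 2)
      = ‖∫ x, |h x| ^ a * h x * h x ∂torusMeasure d‖ₑ :=
        eLpNorm_rpow_eq_enorm_integral ha (hhper.memLp hh.continuous _)
    _ = ‖∫ x, g x * ((a + 1) * |h x| ^ a * fderiv ℝ h x e) ∂torusMeasure d‖ₑ := by
        simp only [← hderiv]
        exact (congrArg enorm hparts).trans (enorm_neg _)
    _ ≤ ∫⁻ x, ‖g x * ((a + 1) * |h x| ^ a * fderiv ℝ h x e)‖ₑ ∂torusMeasure d :=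
        enorm_integral_le_lintegral_enorm _
    _ = ENNReal.ofReal (a + 1) *
          ∫⁻ x, ‖h x‖ₑ ^ a * (‖g x‖ₑ * ‖fderiv ℝ h x e‖ₑ) ∂torusMeasure d := by
        rw [← lintegral_const_mul' _ _ ENNReal.ofReal_ne_top]
        refine lintegral_congr fun x ↦ ?_
        rw [enorm_mul, enorm_mul, enorm_mul, Real.enorm_rpow_of_nonneg (abs_nonneg _) ha.le,
          ← Real.norm_eq_abs, enorm_norm, Real.enorm_of_nonneg (by positivity : 0 ≤ a + 1)]
        ring

lemma eLpNorm_fderiv_apply_sq_le (hg : ContDiff ℝ 2 g) (hper : IsTorusPeriodic g)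
    (e : EuclideanSpace ℝ (Fin d)) (ha : 0 < a) {q r : ℝ≥0∞}
    (hqr : q⁻¹ + r⁻¹ = ENNReal.ofReal (2 / (a + 2))) :
    eLpNorm (fun x ↦ fderiv ℝ g x e) (ENNReal.ofReal (a + 2)) (torusMeasure d) ^ 2 ≤
      ENNReal.ofReal (a + 1) * (eLpNorm g q (torusMeasure d) *
        eLpNorm (fun x ↦ fderiv ℝ (fun y ↦ fderiv ℝ g y e) x e) r (torusMeasure d)) := by
  have hh : ContDiff ℝ 1 fun x ↦ fderiv ℝ g x e :=
    (hg.fderiv_right le_rfl).clm_apply contDiff_const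
  have : Continuous (fderiv ℝ fun x ↦ fderiv ℝ g x e) := hh.continuous_fderiv one_ne_zero
  refine sq_le_of_rpow_add_two_le
    ((hper.fderiv_apply e).memLp hh.continuous _).eLpNorm_ne_top (a := a) ?_
  refine (eLpNorm_fderiv_apply_rpow_le hg hper e ha).trans ?_
  rw [mul_left_comm]
  gcongr
  exact lintegral_enorm_rpow_mul_enorm_mul_le hg.continuous.aestronglyMeasurable
    (Continuous.aestronglyMeasurable (by fun_prop)) hh.continuous.aestronglyMeasurable ha hqr

end GagliardoNirenberg

section LogConvex

variable {m : ℕ}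

lemma le_max_endpoints_of_sq_le_mul {b : ℕ → ℝ≥0∞} {K : ℝ≥0∞} (hK : K < 1) (hb : ∀ i ≤ m, b i ≠ ⊤)
    (hconv : ∀ i, i + 1 < m → b (i + 1) ^ 2 ≤ K * (b i * b (i + 2))) {i : ℕ} (hi : i ≤ m) :
    b i ≤ max (b 0) (b m) := by
  obtain ⟨n, hn, hmax⟩ := Finset.exists_max_image (Finset.range (m + 1)) b ⟨0, by simp⟩
  simp only [Finset.mem_range, Nat.lt_succ_iff] at hn hmax
  refine (hmax i hi).trans ?_
  rcases n with - | n
  · exact le_max_left _ _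
  rcases hn.eq_or_lt with rfl | hnm
  · exact le_max_right _ _
  -- At an interior maximum `M ^ 2 ≤ K * M ^ 2` with `K < 1`, so `M = 0`.
  have hM : b (n + 1) ^ 2 ≤ K * b (n + 1) ^ 2 := by
    refine (hconv n hnm).trans ?_
    rw [sq]
    gcongr
    exacts [hmax n (by lia), hmax (n + 2) hnm]
  have hzero : b (n + 1) = 0 := by
    by_contra hne
    refine hM.not_gt ?_
    simpa using ENNReal.mul_lt_mul_left (pow_ne_zero 2 hne) (ENNReal.pow_ne_top (hb _ hn)) hK
  simp [hzero]

-- The weights `K ^ i ^ 2` turn the factor `K` in the hypothesis into `K⁻¹ < 1`.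
lemma le_pow_mul_endpoints_of_sq_le_mul {c : ℕ → ℝ≥0∞} {K : ℝ≥0∞} (hK : 1 < K) (hK_top : K ≠ ⊤)
    (hc : ∀ i ≤ m, c i ≠ ⊤) (hconv : ∀ i, i + 1 < m → c (i + 1) ^ 2 ≤ K * (c i * c (i + 2)))
    {i : ℕ} (hi : i ≤ m) : c i ≤ K ^ m ^ 2 * (c 0 + c m) := by
  have hK0 : K ≠ 0 := (zero_lt_one.trans hK).ne'
  have hweighted (i) (hi : i + 1 < m) : (K ^ (i + 1) ^ 2 * c (i + 1)) ^ 2 ≤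
      K⁻¹ * (K ^ i ^ 2 * c i * (K ^ (i + 2) ^ 2 * c (i + 2))) := by
    calc (K ^ (i + 1) ^ 2 * c (i + 1)) ^ 2
        ≤ K ^ (2 * (i + 1) ^ 2) * (K * (c i * c (i + 2))) := by
          rw [mul_pow, ← pow_mul, mul_comm _ 2]
          gcongr
          exact hconv i hi
      _ = K⁻¹ * K * (K ^ (2 * (i + 1) ^ 2) * (K * (c i * c (i + 2)))) := by
          rw [ENNReal.inv_mul_cancel hK0 hK_top, one_mul]
      _ = _ := by ring
  calc c i ≤ K ^ i ^ 2 * c i := le_mul_of_one_le_left' (one_le_pow₀ hK.le)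
    _ ≤ max (K ^ 0 ^ 2 * c 0) (K ^ m ^ 2 * c m) :=
        le_max_endpoints_of_sq_le_mul (ENNReal.inv_lt_one.2 hK)
          (fun i hi ↦ ENNReal.mul_ne_top (ENNReal.pow_ne_top hK_top) (hc i hi)) hweighted hi
    _ ≤ K ^ m ^ 2 * c 0 + K ^ m ^ 2 * c m := by
        refine max_le (le_add_right ?_) le_add_self
        gcongr
        exacts [hK.le, by simp]
    _ = K ^ m ^ 2 * (c 0 + c m) := (mul_add _ _ _).symm

end LogConvex

section PartialDerivatives

lemma norm_continuousMultilinearMap_le_sum {ι E F : Type*} [Fintype ι] [NormedAddCommGroup E]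
    [InnerProductSpace ℝ E] [NormedAddCommGroup F] [NormedSpace ℝ F] (b : OrthonormalBasis ι ℝ E)
    {n : ℕ} (A : ContinuousMultilinearMap ℝ (fun _ : Fin n ↦ E) F) :
    ‖A‖ ≤ ∑ I : Fin n → ι, ‖A fun i ↦ b (I i)‖ := by
  classical
  refine A.opNorm_le_bound (Finset.sum_nonneg fun _ _ ↦ norm_nonneg _) fun m ↦ ?_
  have hexpand : A m = ∑ I : Fin n → ι, (∏ i, inner ℝ (b (I i)) (m i)) • A fun i ↦ b (I i) := by
    conv_lhs => rw [← funext fun i ↦ b.sum_repr' (m i)]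
    simp only [A.map_sum, A.map_smul_univ]
  rw [hexpand, Finset.sum_mul]
  refine norm_sum_le_of_le _ fun I _ ↦ ?_
  rw [norm_smul, mul_comm, norm_prod]
  gcongr with i
  simpa using norm_inner_le_norm (𝕜 := ℝ) (b (I i)) (m i)

variable {d n : ℕ} {f : EuclideanSpace ℝ (Fin d) → ℝ}

/-- The iterated partial derivative `∂_{I 0} ⋯ ∂_{I (n - 1)} f`; the multi-index of the paper
records how often each coordinate occurs in `I`. -/
noncomputable def iteratedPartialDeriv (f : EuclideanSpace ℝ (Fin d) → ℝ) (I : Fin n → Fin d)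
    (x : EuclideanSpace ℝ (Fin d)) : ℝ :=
  iteratedFDeriv ℝ n f x fun i ↦ EuclideanSpace.single (I i) 1

lemma contDiff_iteratedPartialDeriv {k m : ℕ} (hf : ContDiff ℝ k f) (I : Fin n → Fin d)
    (hk : m + n ≤ k) : ContDiff ℝ m (iteratedPartialDeriv f I) :=
  (ContinuousMultilinearMap.apply ℝ (fun _ : Fin n ↦ EuclideanSpace ℝ (Fin d)) ℝ
    fun i ↦ EuclideanSpace.single (I i) 1).contDiff.comp
    (hf.iteratedFDeriv_right (by exact_mod_cast hk))

lemma fderiv_iteratedPartialDeriv_single {k : ℕ} (hf : ContDiff ℝ k f) (hk : n + 1 ≤ k)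
    (I : Fin n → Fin d) (l : Fin d) (x : EuclideanSpace ℝ (Fin d)) :
    fderiv ℝ (iteratedPartialDeriv f I) x (EuclideanSpace.single l 1) =
      iteratedPartialDeriv f (Fin.cons l I : Fin (n + 1) → Fin d) x := by
  have hdiff : DifferentiableAt ℝ (iteratedFDeriv ℝ n f) x :=
    hf.differentiable_iteratedFDeriv (by exact_mod_cast hk) x
  unfold iteratedPartialDeriv
  rw [iteratedFDeriv_succ_apply_left, fderiv_continuousMultilinear_apply_const_apply hdiff]
  rfl

protected lemma IsTorusPeriodic.iteratedPartialDeriv (hper : IsTorusPeriodic f)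
    (I : Fin n → Fin d) : IsTorusPeriodic (iteratedPartialDeriv f I) :=
  (hper.iteratedFDeriv n).comp_left fun A ↦ A fun i ↦ EuclideanSpace.single (I i) 1

lemma norm_iteratedPartialDeriv_le (f : EuclideanSpace ℝ (Fin d) → ℝ) (I : Fin n → Fin d)
    (x : EuclideanSpace ℝ (Fin d)) :
    ‖iteratedPartialDeriv f I x‖ ≤ ‖iteratedFDeriv ℝ n f x‖ := by
  simpa [iteratedPartialDeriv] using
    (iteratedFDeriv ℝ n f x).le_opNorm fun i ↦ EuclideanSpace.single (I i) 1

lemma norm_iteratedFDeriv_le_sum (f : EuclideanSpace ℝ (Fin d) → ℝ) (n : ℕ)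
    (x : EuclideanSpace ℝ (Fin d)) :
    ‖iteratedFDeriv ℝ n f x‖ ≤ ∑ I : Fin n → Fin d, ‖iteratedPartialDeriv f I x‖ := by
  simpa using! norm_continuousMultilinearMap_le_sum (EuclideanSpace.basisFun (Fin d) ℝ)
    (iteratedFDeriv ℝ n f x)

lemma eLpNorm_iteratedFDeriv_le {μ : Measure (EuclideanSpace ℝ (Fin d))} {p C : ℝ≥0∞}
    (hp : 1 ≤ p) (hf : ContDiff ℝ n f)
    (hC : ∀ I : Fin n → Fin d, eLpNorm (iteratedPartialDeriv f I) p μ ≤ C) :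
    eLpNorm (iteratedFDeriv ℝ n f) p μ ≤ d ^ n * C := by
  have hcont (I : Fin n → Fin d) : Continuous (iteratedPartialDeriv f I) :=
    (contDiff_iteratedPartialDeriv (m := 0) hf I (by lia)).continuous
  calc eLpNorm (iteratedFDeriv ℝ n f) p μ
      ≤ eLpNorm (∑ I : Fin n → Fin d, fun x ↦ ‖iteratedPartialDeriv f I x‖) p μ :=
        eLpNorm_mono_real fun x ↦ by simpa using norm_iteratedFDeriv_le_sum f n x
    _ ≤ ∑ I : Fin n → Fin d, eLpNorm (fun x ↦ ‖iteratedPartialDeriv f I x‖) p μ :=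
        eLpNorm_sum_le (fun I _ ↦ (hcont I).norm.aestronglyMeasurable) hp
    _ ≤ ∑ _ : Fin n → Fin d, C := by
        gcongr with I
        rw [eLpNorm_norm]
        exact hC I
    _ = d ^ n * C := by simp

end PartialDerivatives

section TorusDerivatives

variable {d n : ℕ} {f : EuclideanSpace ℝ (Fin d) → ℝ}

lemma IsTorusPeriodic.memLp_iteratedFDeriv (hper : IsTorusPeriodic f) {k : ℕ}
    (hf : ContDiff ℝ k f) (hn : n ≤ k) (p : ℝ≥0∞) :
    MemLp (iteratedFDeriv ℝ n f) p (torusMeasure d) :=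
  (hper.iteratedFDeriv n).memLp (hf.continuous_iteratedFDeriv (by exact_mod_cast hn)) p

-- Rolle's theorem along the period `eₗ`.
lemma exists_iteratedPartialDeriv_add_smul_eq_zero (hf : ContDiff ℝ (n + 1 : ℕ) f)
    (hper : IsTorusPeriodic f) (l : Fin d) (I : Fin n → Fin d) (x : EuclideanSpace ℝ (Fin d)) :
    ∃ t ∈ Icc (0 : ℝ) 1, iteratedPartialDeriv f (Fin.cons l I : Fin (n + 1) → Fin d)
      (x + t • EuclideanSpace.single l 1) = 0 := by
  have hI : ContDiff ℝ (1 : ℕ) (iteratedPartialDeriv f I) :=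
    contDiff_iteratedPartialDeriv hf I (add_comm 1 n).le
  simp only [← fderiv_iteratedPartialDeriv_single hf le_rfl I l]
  exact exists_fderiv_add_smul_eq_zero (hI.differentiable (by simp))
    ((hper.iteratedPartialDeriv I).periodic_single l) x

lemma eLpNorm_iteratedFDeriv_succ_le (hf : ContDiff ℝ (n + 2 : ℕ) f) (hper : IsTorusPeriodic f)
    {p : ℝ≥0∞} (hp : 1 ≤ p) (hp_top : p ≠ ⊤) :
    eLpNorm (iteratedFDeriv ℝ (n + 1) f) p (torusMeasure d) ≤
      d ^ (n + 1) * eLpNorm (iteratedFDeriv ℝ (n + 2) f) p (torusMeasure d) := by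
  have hf' : ContDiff ℝ (n + 1 : ℕ) f := hf.of_le (by exact_mod_cast (n + 1).le_succ)
  refine eLpNorm_iteratedFDeriv_le hp hf' (Fin.forall_fin_succ_pi.2 fun l I ↦ ?_)
  refine (eLpNorm_le_eLpNorm_fderiv_apply (contDiff_iteratedPartialDeriv hf _ (by lia))
    (hper.iteratedPartialDeriv _) (exists_iteratedPartialDeriv_add_smul_eq_zero hf' hper l I)
    hp hp_top).trans (eLpNorm_mono fun x ↦ ?_)
  rw [fderiv_iteratedPartialDeriv_single hf le_rfl]
  exact norm_iteratedPartialDeriv_le f _ x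

lemma eLpNorm_iteratedFDeriv_le_of_le (hd : 0 < d) {k : ℕ} (hn : 1 ≤ n) (hnk : n ≤ k)
    (hf : ContDiff ℝ k f) (hper : IsTorusPeriodic f) {p : ℝ≥0∞} (hp : 1 ≤ p) (hp_top : p ≠ ⊤) :
    eLpNorm (iteratedFDeriv ℝ n f) p (torusMeasure d) ≤
      d ^ k ^ 2 * eLpNorm (iteratedFDeriv ℝ k f) p (torusMeasure d) := by
  have hd' : (1 : ℝ≥0∞) ≤ d := by exact_mod_cast hd
  induction k, hnk using Nat.le_induction with
  | base => exact le_mul_of_one_le_left' (one_le_pow₀ hd')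
  | succ k hnk ih =>
    obtain ⟨j, rfl⟩ := Nat.exists_eq_add_of_le' (hn.trans hnk)
    calc eLpNorm (iteratedFDeriv ℝ n f) p (torusMeasure d)
        ≤ d ^ (j + 1) ^ 2 * eLpNorm (iteratedFDeriv ℝ (j + 1) f) p (torusMeasure d) :=
          ih (hf.of_le (by exact_mod_cast (j + 1).le_succ))
      _ ≤ d ^ (j + 1) ^ 2 *
            (d ^ (j + 1) * eLpNorm (iteratedFDeriv ℝ (j + 2) f) p (torusMeasure d)) := by
          gcongr
          exact eLpNorm_iteratedFDeriv_succ_le hf hper hp hp_top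
      _ ≤ d ^ (j + 2) ^ 2 * eLpNorm (iteratedFDeriv ℝ (j + 2) f) p (torusMeasure d) := by
          rw [← mul_assoc, ← pow_add]
          gcongr
          nlinarith

lemma eLpNorm_iteratedFDeriv_succ_sq_le (hf : ContDiff ℝ (n + 2 : ℕ) f) (hper : IsTorusPeriodic f)
    {a : ℝ} (ha : 0 < a) {q r : ℝ≥0∞} (hqr : q⁻¹ + r⁻¹ = ENNReal.ofReal (2 / (a + 2))) :
    eLpNorm (iteratedFDeriv ℝ (n + 1) f) (ENNReal.ofReal (a + 2)) (torusMeasure d) ^ 2 ≤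
      (d ^ (n + 1)) ^ 2 * (ENNReal.ofReal (a + 1) *
        (eLpNorm (iteratedFDeriv ℝ n f) q (torusMeasure d) *
          eLpNorm (iteratedFDeriv ℝ (n + 2) f) r (torusMeasure d))) := by
  set Y := ENNReal.ofReal (a + 1) * (eLpNorm (iteratedFDeriv ℝ n f) q (torusMeasure d) *
    eLpNorm (iteratedFDeriv ℝ (n + 2) f) r (torusMeasure d))
  have hpartial (l : Fin d) (I : Fin n → Fin d) :
      eLpNorm (iteratedPartialDeriv f (Fin.cons l I : Fin (n + 1) → Fin d))
        (ENNReal.ofReal (a + 2)) (torusMeasure d) ^ 2 ≤ Y := by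
    have hGN := eLpNorm_fderiv_apply_sq_le (contDiff_iteratedPartialDeriv (m := 2) hf I (by lia))
      (hper.iteratedPartialDeriv I) (EuclideanSpace.single l 1) ha hqr
    simp only [fderiv_iteratedPartialDeriv_single hf (by lia : n + 1 ≤ n + 2),
      fderiv_iteratedPartialDeriv_single hf le_rfl] at hGN
    refine hGN.trans (mul_le_mul' le_rfl (mul_le_mul' ?_ ?_)) <;>
      exact eLpNorm_mono fun x ↦ norm_iteratedPartialDeriv_le f _ x
  have hsqrt : eLpNorm (iteratedFDeriv ℝ (n + 1) f) (ENNReal.ofReal (a + 2)) (torusMeasure d) ≤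
      d ^ (n + 1) * Y ^ (2⁻¹ : ℝ) := by
    refine eLpNorm_iteratedFDeriv_le (by simpa using by linarith)
      (hf.of_le (by exact_mod_cast (n + 1).le_succ)) (Fin.forall_fin_succ_pi.2 fun l I ↦ ?_)
    rw [ENNReal.le_rpow_inv_iff two_pos, ENNReal.rpow_ofNat]
    exact hpartial l I
  calc eLpNorm (iteratedFDeriv ℝ (n + 1) f) (ENNReal.ofReal (a + 2)) (torusMeasure d) ^ 2
      ≤ (d ^ (n + 1) * Y ^ (2⁻¹ : ℝ)) ^ 2 := by gcongr
    _ = (d ^ (n + 1)) ^ 2 * Y := by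
      rw [mul_pow, ← ENNReal.rpow_ofNat (Y ^ _), ENNReal.rpow_inv_rpow two_ne_zero]

-- With `m` fixed, the exponents `2 m / i` run from `∞` at `i = 0` down to `2` at `i = m`.
lemma eLpNorm_iteratedFDeriv_succ_sq_le_of_lt {m i : ℕ} (hi : i + 1 < m)
    (hf : ContDiff ℝ (n + 2 : ℕ) f) (hper : IsTorusPeriodic f) :
    eLpNorm (iteratedFDeriv ℝ (n + 1) f) (2 * m / (i + 1 : ℕ)) (torusMeasure d) ^ 2 ≤
      (d ^ (n + 1)) ^ 2 * (2 * m *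
        (eLpNorm (iteratedFDeriv ℝ n f) (2 * m / i) (torusMeasure d) *
          eLpNorm (iteratedFDeriv ℝ (n + 2) f) (2 * m / (i + 2 : ℕ)) (torusMeasure d))) := by
  have hi' : (i + 1 : ℝ) < m := by exact_mod_cast hi
  have hm : 0 < m := by lia
  set a : ℝ := 2 * m / (i + 1) - 2
  have ha : 0 < a := by
    rw [sub_pos, lt_div_iff₀ (by positivity)]
    linarith
  have ha_add : a + 2 = (2 * m : ℕ) / (i + 1 : ℕ) := by simp [a]
  have hp : ENNReal.ofReal (a + 2) = 2 * m / (i + 1 : ℕ) := by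
    rw [ha_add, ENNReal.ofReal_div_of_pos (by positivity), ENNReal.ofReal_natCast,
      ENNReal.ofReal_natCast, Nat.cast_mul, Nat.cast_ofNat]
  have hqr : (2 * m / i : ℝ≥0∞)⁻¹ + (2 * m / (i + 2 : ℕ) : ℝ≥0∞)⁻¹ =
      ENNReal.ofReal (2 / (a + 2)) := by
    have hreal : 2 / (a + 2) = (i + (i + 2) : ℕ) / (2 * m : ℕ) := by
      rw [ha_add]
      push_cast
      field_simp
      ring
    rw [ENNReal.inv_div (by simp) (by simp; lia), ENNReal.inv_div (by simp) (by simp), hreal,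
      ENNReal.ofReal_div_of_pos (by positivity), ENNReal.ofReal_natCast, ENNReal.ofReal_natCast,
      ← ENNReal.add_div]
    push_cast
    rfl
  have ha_le : ENNReal.ofReal (a + 1) ≤ 2 * m := by
    refine ENNReal.ofReal_le_of_le_toReal ?_
    have : 2 * (m : ℝ) / (i + 1) ≤ 2 * m := div_le_self (by positivity) (by simp)
    simp only [ENNReal.toReal_mul, ENNReal.toReal_ofNat, ENNReal.toReal_natCast, a]
    linarith
  rw [← hp]
  refine (eLpNorm_iteratedFDeriv_succ_sq_le hf hper ha hqr).trans ?_
  gcongr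

end TorusDerivatives

section Commutator

lemma norm_iteratedFDeriv_smul_sub_smul_le {𝕜 E F : Type*} [NontriviallyNormedField 𝕜]
    [NormedAddCommGroup E] [NormedSpace 𝕜 E] [NormedAddCommGroup F] [NormedSpace 𝕜 F] {u : E → 𝕜}
    {v : E → F} {n : ℕ} (hu : ContDiff 𝕜 n u) (hv : ContDiff 𝕜 n v) (x : E) :
    ‖iteratedFDeriv 𝕜 n (fun y ↦ u y • v y) x - u x • iteratedFDeriv 𝕜 n v x‖ ≤
      ∑ i ∈ Finset.range n, (n.choose (i + 1) : ℝ) *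
        (‖iteratedFDeriv 𝕜 (i + 1) u x‖ * ‖iteratedFDeriv 𝕜 (n - (i + 1)) v x‖) := by
  set w : E → 𝕜 := fun y ↦ u y - u x
  have hw : ContDiff 𝕜 n w := hu.sub contDiff_const
  have hw_zero : ‖iteratedFDeriv 𝕜 0 w x‖ = 0 := by simp [w]
  have hw_succ (i) : iteratedFDeriv 𝕜 (i + 1) w x = iteratedFDeriv 𝕜 (i + 1) u x := by
    have hfderiv : fderiv 𝕜 w = fderiv 𝕜 u := funext fun y ↦ fderiv_sub_const (u x)
    rw [iteratedFDeriv_succ_eq_comp_right, iteratedFDeriv_succ_eq_comp_right, hfderiv]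
  have hcomm : iteratedFDeriv 𝕜 n (fun y ↦ u y • v y) x - u x • iteratedFDeriv 𝕜 n v x =
      iteratedFDeriv 𝕜 n (fun y ↦ w y • v y) x := by
    have hu_smul : ContDiff 𝕜 n fun y ↦ u y • v y := hu.smul hv
    simp only [w, sub_smul]
    rw [fun_iteratedFDeriv_sub_apply hu_smul.contDiffAt (hv.const_smul _).contDiffAt,
      iteratedFDeriv_const_smul_apply' hv.contDiffAt]
  rw [hcomm]
  refine (norm_iteratedFDeriv_smul_le hw hv x le_rfl).trans_eq ?_
  rw [Finset.sum_range_succ', hw_zero]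
  simp [hw_succ, mul_assoc]

end Commutator

section Moser

lemma eLpNorm_norm_mul_norm_le {α E F : Type*} {mα : MeasurableSpace α} {μ : Measure α}
    [NormedAddCommGroup E] [NormedAddCommGroup F] {f : α → E} {g : α → F}
    (hf : AEStronglyMeasurable f μ) (hg : AEStronglyMeasurable g μ) (p q r : ℝ≥0∞)
    [ENNReal.HolderTriple p q r] :
    eLpNorm (fun x ↦ ‖f x‖ * ‖g x‖) r μ ≤ eLpNorm f p μ * eLpNorm g q μ := by
  simpa only [eLpNorm_norm] using! eLpNorm_smul_le_mul_eLpNorm (p := p) (q := q) hg.norm hf.norm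

lemma holderTriple_two_mul_div {i j m : ℕ} (hij : i + j = m) (hm : 0 < m) :
    ENNReal.HolderTriple (2 * m / i) (2 * m / j) 2 where
  inv_add_inv_eq_inv := by
    rw [ENNReal.inv_div (by simp) (by simp; lia), ENNReal.inv_div (by simp) (by simp; lia),
      ← ENNReal.add_div, ← Nat.cast_add, hij, ← ENNReal.inv_div (by simp) (by simp; lia),
      ENNReal.mul_div_cancel_right (by simpa using hm.ne') (by simp)]

variable {d : ℕ} {u v : EuclideanSpace ℝ (Fin d) → ℝ}

lemma eLpNorm_mul_eLpNorm_sq_le {i j m : ℕ} (hij : i + j + 2 = m) (hu : ContDiff ℝ (m + 1 : ℕ) u)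
    (hv : ContDiff ℝ m v) (huper : IsTorusPeriodic u) (hvper : IsTorusPeriodic v) :
    (eLpNorm (iteratedFDeriv ℝ (i + 2) u) (2 * m / (i + 1 : ℕ)) (torusMeasure d) *
        eLpNorm (iteratedFDeriv ℝ (j + 1) v) (2 * m / (j + 1 : ℕ)) (torusMeasure d)) ^ 2 ≤
      (2 * m * d ^ (m + 1)) ^ 2 *
        (eLpNorm (iteratedFDeriv ℝ (i + 1) u) (2 * m / i) (torusMeasure d) *
            eLpNorm (iteratedFDeriv ℝ (j + 2) v) (2 * m / (j + 2 : ℕ)) (torusMeasure d) *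
          (eLpNorm (iteratedFDeriv ℝ (i + 3) u) (2 * m / (i + 2 : ℕ)) (torusMeasure d) *
            eLpNorm (iteratedFDeriv ℝ j v) (2 * m / j) (torusMeasure d))) := by
  have hGNu := eLpNorm_iteratedFDeriv_succ_sq_le_of_lt (n := i + 1) (i := i) (m := m) (by lia)
    (hu.of_le (by exact_mod_cast by lia)) huper
  have hGNv := eLpNorm_iteratedFDeriv_succ_sq_le_of_lt (n := j) (i := j) (m := m) (by lia)
    (hv.of_le (by exact_mod_cast by lia)) hvper
  have hd : (d : ℝ≥0∞) ^ (m + 1) = d ^ (i + 2) * d ^ (j + 1) := by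
    rw [← pow_add, ← hij]
    ring
  rw [mul_pow, hd]
  exact (mul_le_mul' hGNu hGNv).trans_eq (by ring)

lemma eLpNorm_mul_eLpNorm_le_endpoints (hd : 0 < d) {i j m : ℕ} (hij : i + j = m) (hm : 0 < m)
    (hu : ContDiff ℝ (m + 1 : ℕ) u) (hv : ContDiff ℝ m v) (huper : IsTorusPeriodic u)
    (hvper : IsTorusPeriodic v) :
    eLpNorm (iteratedFDeriv ℝ (i + 1) u) (2 * m / i) (torusMeasure d) *
        eLpNorm (iteratedFDeriv ℝ j v) (2 * m / j) (torusMeasure d) ≤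
      ((2 * m * d ^ (m + 1)) ^ 2) ^ m ^ 2 *
        (eLpNorm (iteratedFDeriv ℝ 1 u) ⊤ (torusMeasure d) *
            eLpNorm (iteratedFDeriv ℝ m v) 2 (torusMeasure d) +
          eLpNorm (iteratedFDeriv ℝ (m + 1) u) 2 (torusMeasure d) *
            eLpNorm (iteratedFDeriv ℝ 0 v) ⊤ (torusMeasure d)) := by
  let A (i : ℕ) : ℝ≥0∞ := eLpNorm (iteratedFDeriv ℝ (i + 1) u) (2 * m / i) (torusMeasure d)
  let B (j : ℕ) : ℝ≥0∞ := eLpNorm (iteratedFDeriv ℝ j v) (2 * m / j) (torusMeasure d)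
  let c (i : ℕ) : ℝ≥0∞ := A i * B (m - i)
  have hK : (1 : ℝ≥0∞) < (2 * m * d ^ (m + 1)) ^ 2 := by
    have : 1 < (2 * m * d ^ (m + 1)) ^ 2 :=
      one_lt_pow₀ (Nat.one_lt_mul_iff.2 ⟨by lia, by positivity, .inl (by lia)⟩) two_ne_zero
    exact_mod_cast this
  have hc (i) (hi : i ≤ m) : c i ≠ ⊤ := ENNReal.mul_ne_top
    (huper.memLp_iteratedFDeriv hu (by lia) _).eLpNorm_ne_top
    (hvper.memLp_iteratedFDeriv hv (by lia) _).eLpNorm_ne_top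
  have hconv (i) (hi : i + 1 < m) :
      c (i + 1) ^ 2 ≤ (2 * m * d ^ (m + 1)) ^ 2 * (c i * c (i + 2)) := by
    obtain ⟨j, hj⟩ : ∃ j, i + j + 2 = m := ⟨m - i - 2, by lia⟩
    simp only [c, show m - i = j + 2 by lia, show m - (i + 1) = j + 1 by lia,
      show m - (i + 2) = j by lia]
    exact eLpNorm_mul_eLpNorm_sq_le hj hu hv huper hvper
  have htwo : (2 * m / m : ℝ≥0∞) = 2 :=
    ENNReal.mul_div_cancel_right (by exact_mod_cast hm.ne') (by simp)
  have htop : (2 * m / (0 : ℕ) : ℝ≥0∞) = ⊤ := by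
    rw [Nat.cast_zero, ENNReal.div_zero (by simp; lia)]
  have hbound := le_pow_mul_endpoints_of_sq_le_mul hK (by finiteness) hc hconv (i := i) (by lia)
  simp only [c, show m - i = j by lia, Nat.sub_zero, Nat.sub_self] at hbound
  simpa only [A, B, htwo, htop, zero_add] using! hbound

/-- The right-hand side of the Moser estimate with `m` derivatives on `v` and `m + 1` on `u`. -/
noncomputable def moserBound (u v : EuclideanSpace ℝ (Fin d) → ℝ) (m : ℕ) : ℝ≥0∞ :=
  eLpNorm (fderiv ℝ u) ⊤ (torusMeasure d) * eLpNorm (iteratedFDeriv ℝ m v) 2 (torusMeasure d) +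
    eLpNorm v ⊤ (torusMeasure d) * eLpNorm (iteratedFDeriv ℝ (m + 1) u) 2 (torusMeasure d)

/-- The constant that log-convexity produces in the interpolated product estimates of total
order `m + 1` in dimension `d`. -/
def moserConst (d m : ℕ) : ℕ := ((2 * m * d ^ (m + 1)) ^ 2) ^ m ^ 2

lemma le_moserConst {m : ℕ} (hm : 0 < m) : d ≤ moserConst d m := by
  refine le_trans ?_ (Nat.le_self_pow (by positivity) _)
  refine le_trans ?_ (Nat.le_self_pow two_ne_zero _)
  exact (Nat.le_self_pow m.succ_ne_zero d).trans (Nat.le_mul_of_pos_left _ (by positivity))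

lemma moserConst_le_moserConst (hd : 0 < d) {m n : ℕ} (hm : 0 < m) (hmn : m ≤ n) :
    moserConst d m ≤ moserConst d n := by
  have hn : 0 < n := hm.trans_le hmn
  unfold moserConst
  calc ((2 * m * d ^ (m + 1)) ^ 2) ^ m ^ 2 ≤ ((2 * n * d ^ (n + 1)) ^ 2) ^ m ^ 2 := by gcongr
    _ ≤ ((2 * n * d ^ (n + 1)) ^ 2) ^ n ^ 2 :=
        pow_le_pow_right₀ (Nat.succ_le_of_lt (by positivity)) (by gcongr)

lemma eLpNorm_iteratedFDeriv_one (u : EuclideanSpace ℝ (Fin d) → ℝ) (p : ℝ≥0∞)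
    (μ : Measure (EuclideanSpace ℝ (Fin d))) :
    eLpNorm (iteratedFDeriv ℝ 1 u) p μ = eLpNorm (fderiv ℝ u) p μ :=
  eLpNorm_congr_norm_ae (.of_forall fun _ ↦ norm_iteratedFDeriv_one u)

lemma eLpNorm_iteratedFDeriv_zero (u : EuclideanSpace ℝ (Fin d) → ℝ) (p : ℝ≥0∞)
    (μ : Measure (EuclideanSpace ℝ (Fin d))) :
    eLpNorm (iteratedFDeriv ℝ 0 u) p μ = eLpNorm u p μ :=
  eLpNorm_congr_norm_ae (.of_forall fun _ ↦ norm_iteratedFDeriv_zero)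

lemma eLpNorm_iteratedFDeriv_mul_le_moserBound (hd : 0 < d) {i j m : ℕ} (hij : i + j = m)
    (hm : 0 < m) (hu : ContDiff ℝ (m + 1 : ℕ) u) (hv : ContDiff ℝ m v) (huper : IsTorusPeriodic u)
    (hvper : IsTorusPeriodic v) :
    eLpNorm (fun x ↦ ‖iteratedFDeriv ℝ (i + 1) u x‖ * ‖iteratedFDeriv ℝ j v x‖) 2
        (torusMeasure d) ≤ moserConst d m * moserBound u v m := by
  have hholder := holderTriple_two_mul_div hij hm
  have hconst : (moserConst d m : ℝ≥0∞) = ((2 * m * d ^ (m + 1)) ^ 2) ^ m ^ 2 := by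
    simp [moserConst]
  rw [hconst, moserBound, ← eLpNorm_iteratedFDeriv_one, ← eLpNorm_iteratedFDeriv_zero v,
    mul_comm (eLpNorm (iteratedFDeriv ℝ 0 v) _ _)]
  exact (eLpNorm_norm_mul_norm_le (huper.memLp_iteratedFDeriv hu (by lia) 2).1
    (hvper.memLp_iteratedFDeriv hv (by lia) 2).1 (2 * m / i) (2 * m / j) 2).trans
    (eLpNorm_mul_eLpNorm_le_endpoints hd hij hm hu hv huper hvper)

lemma moserBound_le_of_le (hd : 0 < d) {m n : ℕ} (hm : 0 < m) (hmn : m ≤ n)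
    (hu : ContDiff ℝ (n + 1 : ℕ) u) (hv : ContDiff ℝ n v) (huper : IsTorusPeriodic u)
    (hvper : IsTorusPeriodic v) :
    moserBound u v m ≤ d ^ (n + 1) ^ 2 * moserBound u v n := by
  have hd' : (1 : ℝ≥0∞) ≤ d := by exact_mod_cast hd
  have hu_le := eLpNorm_iteratedFDeriv_le_of_le hd (by lia) (by lia : m + 1 ≤ n + 1) hu huper
    one_le_two ENNReal.ofNat_ne_top
  have hv_le : eLpNorm (iteratedFDeriv ℝ m v) 2 (torusMeasure d) ≤
      d ^ (n + 1) ^ 2 * eLpNorm (iteratedFDeriv ℝ n v) 2 (torusMeasure d) := by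
    refine (eLpNorm_iteratedFDeriv_le_of_le hd hm hmn hv hvper
      one_le_two ENNReal.ofNat_ne_top).trans ?_
    gcongr
    exact n.le_succ
  unfold moserBound
  grw [hu_le, hv_le]
  exact le_of_eq (by ring)

lemma eLpNorm_iteratedFDeriv_one_mul_le_moserBound_zero (hu : ContDiff ℝ 1 u)
    (hv : Continuous v) :
    eLpNorm (fun x ↦ ‖iteratedFDeriv ℝ 1 u x‖ * ‖iteratedFDeriv ℝ 0 v x‖) 2 (torusMeasure d) ≤
      moserBound u v 0 := by
  simp only [norm_iteratedFDeriv_one, norm_iteratedFDeriv_zero]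
  refine (eLpNorm_norm_mul_norm_le (hu.continuous_fderiv one_ne_zero).aestronglyMeasurable
    hv.aestronglyMeasurable ⊤ 2 2).trans ?_
  rw [moserBound, eLpNorm_iteratedFDeriv_zero]
  exact le_self_add

lemma norm_fderiv_iteratedPartialDeriv_mul_le (hu : ContDiff ℝ (2 : ℕ) u) (hv : ContDiff ℝ 1 v)
    (I : Fin 1 → Fin d) (l : Fin d) (x : EuclideanSpace ℝ (Fin d)) :
    ‖fderiv ℝ (fun y ↦ iteratedPartialDeriv u I y * v y) x (EuclideanSpace.single l 1)‖ ≤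
      ‖fderiv ℝ u x‖ * ‖iteratedFDeriv ℝ 1 v x‖ + ‖v x‖ * ‖iteratedFDeriv ℝ 2 u x‖ := by
  have hI : ContDiff ℝ (1 : ℕ) (iteratedPartialDeriv u I) :=
    contDiff_iteratedPartialDeriv hu I le_rfl
  have hv_le : ‖fderiv ℝ v x (EuclideanSpace.single l 1)‖ ≤ ‖iteratedFDeriv ℝ 1 v x‖ := by
    simpa [norm_iteratedFDeriv_one] using (fderiv ℝ v x).le_opNorm (EuclideanSpace.single l 1)
  rw [fderiv_fun_mul (hI.differentiable (by simp) x) (hv.differentiable one_ne_zero x)]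
  simp only [add_apply, smul_apply, smul_eq_mul,
    fderiv_iteratedPartialDeriv_single hu le_rfl]
  refine (norm_add_le _ _).trans ?_
  rw [norm_mul, norm_mul, ← norm_iteratedFDeriv_one]
  gcongr <;> apply norm_iteratedPartialDeriv_le

-- `∂ₗu` vanishes somewhere on every line in direction `l`, so Poincaré's inequality holds for
-- `∂ₗu · v` even though `v` alone may have nonzero mean.
lemma eLpNorm_iteratedPartialDeriv_mul_le_moserBound_one (hu : ContDiff ℝ (2 : ℕ) u)
    (hv : ContDiff ℝ 1 v) (huper : IsTorusPeriodic u) (hvper : IsTorusPeriodic v)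
    (I : Fin 1 → Fin d) :
    eLpNorm (fun x ↦ iteratedPartialDeriv u I x * v x) 2 (torusMeasure d) ≤
      moserBound u v 1 := by
  have hI : ContDiff ℝ (1 : ℕ) (iteratedPartialDeriv u I) :=
    contDiff_iteratedPartialDeriv hu I le_rfl
  have hzero (x) : ∃ t ∈ Icc (0 : ℝ) 1,
      iteratedPartialDeriv u I (x + t • EuclideanSpace.single (I 0) 1) *
        v (x + t • EuclideanSpace.single (I 0) 1) = 0 := by
    obtain ⟨t, ht, hut⟩ := exists_iteratedPartialDeriv_add_smul_eq_zero
      (hu.of_le (by norm_num)) huper (I 0) (Fin.tail I) x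
    rw [Fin.cons_self_tail] at hut
    exact ⟨t, ht, by rw [hut, zero_mul]⟩
  have hDu : AEStronglyMeasurable (fderiv ℝ u) (torusMeasure d) :=
    (hu.continuous_fderiv (by simp)).aestronglyMeasurable
  have hD2u := (huper.memLp_iteratedFDeriv hu le_rfl 2).1
  have hDv := (hvper.memLp_iteratedFDeriv (k := 1) hv le_rfl 2).1
  have hv' := hv.continuous.aestronglyMeasurable (μ := torusMeasure d)
  refine (eLpNorm_le_eLpNorm_fderiv_apply (hI.mul hv) ((huper.iteratedPartialDeriv I).mul hvper)
    hzero one_le_two ENNReal.ofNat_ne_top).trans ?_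
  refine (eLpNorm_mono_real
    fun x ↦ norm_fderiv_iteratedPartialDeriv_mul_le hu hv I (I 0) x).trans ?_
  refine (eLpNorm_add_le (hDu.norm.mul hDv.norm) (hv'.norm.mul hD2u.norm) one_le_two).trans ?_
  exact add_le_add (eLpNorm_norm_mul_norm_le hDu hDv ⊤ 2 2)
    (eLpNorm_norm_mul_norm_le hv' hD2u ⊤ 2 2)

lemma eLpNorm_iteratedFDeriv_one_mul_le_moserBound_one (hu : ContDiff ℝ (2 : ℕ) u)
    (hv : ContDiff ℝ 1 v) (huper : IsTorusPeriodic u) (hvper : IsTorusPeriodic v) :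
    eLpNorm (fun x ↦ ‖iteratedFDeriv ℝ 1 u x‖ * ‖iteratedFDeriv ℝ 0 v x‖) 2 (torusMeasure d) ≤
      d * moserBound u v 1 := by
  have hcont (I : Fin 1 → Fin d) : Continuous fun x ↦ iteratedPartialDeriv u I x * v x :=
    (contDiff_iteratedPartialDeriv (m := 0) hu I (by lia)).continuous.mul hv.continuous
  calc eLpNorm (fun x ↦ ‖iteratedFDeriv ℝ 1 u x‖ * ‖iteratedFDeriv ℝ 0 v x‖) 2 (torusMeasure d)
      ≤ eLpNorm (∑ I : Fin 1 → Fin d, fun x ↦ ‖iteratedPartialDeriv u I x * v x‖) 2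
          (torusMeasure d) := by
        refine eLpNorm_mono_real fun x ↦ ?_
        simp only [norm_mul, norm_norm, norm_iteratedFDeriv_zero, Finset.sum_apply,
          ← Finset.sum_mul]
        gcongr
        exact norm_iteratedFDeriv_le_sum u 1 x
    _ ≤ ∑ I : Fin 1 → Fin d, eLpNorm (fun x ↦ ‖iteratedPartialDeriv u I x * v x‖) 2
          (torusMeasure d) :=
        eLpNorm_sum_le (fun I _ ↦ (hcont I).norm.aestronglyMeasurable) one_le_two
    _ ≤ ∑ _ : Fin 1 → Fin d, moserBound u v 1 := by
        gcongr with I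
        rw [eLpNorm_norm]
        exact eLpNorm_iteratedPartialDeriv_mul_le_moserBound_one hu hv huper hvper I
    _ = d * moserBound u v 1 := by simp

lemma eLpNorm_iteratedFDeriv_mul_le_moserBound_of_le (hd : 0 < d) {i j n : ℕ} (hij : i + j ≤ n)
    (hu : ContDiff ℝ (n + 1 : ℕ) u) (hv : ContDiff ℝ n v) (huper : IsTorusPeriodic u)
    (hvper : IsTorusPeriodic v) :
    eLpNorm (fun x ↦ ‖iteratedFDeriv ℝ (i + 1) u x‖ * ‖iteratedFDeriv ℝ j v x‖) 2
        (torusMeasure d) ≤ moserConst d n * d ^ (n + 1) ^ 2 * moserBound u v n := by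
  have hd' : (1 : ℝ≥0∞) ≤ d := by exact_mod_cast hd
  rcases (i + j).eq_zero_or_pos with hzero | hpos
  · obtain ⟨rfl, rfl⟩ := Nat.add_eq_zero_iff.1 hzero
    rcases n.eq_zero_or_pos with rfl | hn
    · refine (eLpNorm_iteratedFDeriv_one_mul_le_moserBound_zero hu hv.continuous).trans ?_
      exact le_mul_of_one_le_left' (by simpa [moserConst] using hd')
    · grw [eLpNorm_iteratedFDeriv_one_mul_le_moserBound_one (hu.of_le (by norm_cast; lia))
        (hv.of_le (by norm_cast)) huper hvper, moserBound_le_of_le hd one_pos hn hu hv huper hvper,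
        ← mul_assoc]
      gcongr
      exact le_moserConst hn
  · grw [eLpNorm_iteratedFDeriv_mul_le_moserBound hd rfl hpos (hu.of_le (by norm_cast; lia))
      (hv.of_le (by norm_cast)) huper hvper, moserBound_le_of_le hd hpos hij hu hv huper hvper,
      ← mul_assoc, moserConst_le_moserConst hd hpos hij]

lemma eLpNorm_iteratedFDeriv_commutator_le (hd : 0 < d) {k n : ℕ} (hk : k ≤ n + 1)
    (hu : ContDiff ℝ (n + 1 : ℕ) u) (hv : ContDiff ℝ (n + 1 : ℕ) v) (huper : IsTorusPeriodic u)
    (hvper : IsTorusPeriodic v) :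
    eLpNorm (fun x ↦ iteratedFDeriv ℝ k (fun y ↦ u y * v y) x - u x • iteratedFDeriv ℝ k v x) 2
        (torusMeasure d) ≤
      2 ^ (n + 1) * (moserConst d n * d ^ (n + 1) ^ 2) * moserBound u v n := by
  let product (i : ℕ) (x : EuclideanSpace ℝ (Fin d)) : ℝ :=
    ‖iteratedFDeriv ℝ (i + 1) u x‖ * ‖iteratedFDeriv ℝ (k - (i + 1)) v x‖
  have hproduct_meas (i) (hi : i < k) : AEStronglyMeasurable (product i) (torusMeasure d) :=
    (huper.memLp_iteratedFDeriv hu (by lia) 2).1.norm.mul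
      (hvper.memLp_iteratedFDeriv hv (by lia) 2).1.norm
  have hproduct_le (i) (hi : i < k) : eLpNorm (product i) 2 (torusMeasure d) ≤
      moserConst d n * d ^ (n + 1) ^ 2 * moserBound u v n :=
    eLpNorm_iteratedFDeriv_mul_le_moserBound_of_le hd (by lia) hu
      (hv.of_le (by norm_cast; lia)) huper hvper
  have hchoose : ∑ i ∈ Finset.range k, k.choose (i + 1) ≤ 2 ^ (n + 1) := by
    refine le_trans ?_ (pow_le_pow_right₀ one_le_two hk)
    rw [← Nat.sum_range_choose, Finset.sum_range_succ']
    exact Nat.le_add_right _ _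
  calc _ ≤ eLpNorm (∑ i ∈ Finset.range k, (k.choose (i + 1) : ℝ) • product i) 2
          (torusMeasure d) := by
        refine eLpNorm_mono_real fun x ↦ ?_
        simpa [product] using norm_iteratedFDeriv_smul_sub_smul_le
          (hu.of_le (by norm_cast)) (hv.of_le (by norm_cast)) x
    _ ≤ ∑ i ∈ Finset.range k,
          eLpNorm ((k.choose (i + 1) : ℝ) • product i) 2 (torusMeasure d) :=
        eLpNorm_sum_le (fun i hi ↦ (hproduct_meas i (Finset.mem_range.1 hi)).const_smul _)
          one_le_two
    _ ≤ ∑ i ∈ Finset.range k, (k.choose (i + 1) : ℝ≥0∞) *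
          (moserConst d n * d ^ (n + 1) ^ 2 * moserBound u v n) := by
        gcongr with i hi
        rw [eLpNorm_const_smul, Real.enorm_natCast]
        gcongr
        exact hproduct_le i (Finset.mem_range.1 hi)
    _ ≤ 2 ^ (n + 1) * (moserConst d n * d ^ (n + 1) ^ 2 * moserBound u v n) := by
        rw [← Finset.sum_mul]
        gcongr
        exact_mod_cast hchoose
    _ = _ := (mul_assoc _ _ _).symm

end Moser

theorem moser_commutator_estimate_general (s d : ℕ) (hs : 0 < s) (hd : 0 < d) :
    ∃ c : ℝ≥0∞, 0 < c ∧ c ≠ ⊤ ∧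
      ∀ u v : EuclideanSpace ℝ (Fin d) → ℝ,
        ContDiff ℝ s u → ContDiff ℝ s v → IsTorusPeriodic u → IsTorusPeriodic v →
        ∀ k ≤ s,
          eLpNorm (fun x ↦ iteratedFDeriv ℝ k (fun y ↦ u y * v y) x - u x • iteratedFDeriv ℝ k v x)
              2 (torusMeasure d) ≤
            c * (eLpNorm (fderiv ℝ u) ⊤ (torusMeasure d) *
                   eLpNorm (iteratedFDeriv ℝ (s - 1) v) 2 (torusMeasure d) +
                 eLpNorm v ⊤ (torusMeasure d) *
                   eLpNorm (iteratedFDeriv ℝ s u) 2 (torusMeasure d)) := by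
  obtain ⟨n, rfl⟩ := Nat.exists_eq_add_of_le' hs
  have hconst : 0 < moserConst d n := by
    rcases n.eq_zero_or_pos with rfl | hn
    · simp [moserConst]
    · exact hd.trans_le (le_moserConst hn)
  refine ⟨2 ^ (n + 1) * (moserConst d n * d ^ (n + 1) ^ 2), by positivity, by finiteness,
    fun u v hu hv huper hvper k hk ↦ ?_⟩
  exact eLpNorm_iteratedFDeriv_commutator_le hd hk hu hv huper hvper

/-- Moser-type commutator estimate:
`‖∂^α(uv) - u ∂^α v‖_{L²} ≤ c(s,d)(‖∇u‖_∞ ‖∇^{s-1} v‖_{L²} + ‖v‖_∞ ‖∇^s u‖_{L²})`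
for all multi-indices `|α| ≤ s`, for (smooth, periodic) functions on the torus `𝕋ᵈ`. -/
theorem moser_commutator_estimate (s d : ℕ) (hs : 0 < s) (hd : 0 < d) :
    ∃ c : ℝ≥0∞, 0 < c ∧ c ≠ ⊤ ∧
      ∀ u v : EuclideanSpace ℝ (Fin d) → ℝ,
        ContDiff ℝ (⊤ : ℕ∞) u → ContDiff ℝ (⊤ : ℕ∞) v → IsTorusPeriodic u → IsTorusPeriodic v →
        ∀ k ≤ s,
          eLpNorm
              (fun x => iteratedFDeriv ℝ k (fun y => u y * v y) x
                 - u x • iteratedFDeriv ℝ k v x) 2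
              (volume.restrict (TorusDomain d)) ≤
            c * (eLpNorm (fderiv ℝ u) ⊤ (volume.restrict (TorusDomain d)) *
                   eLpNorm (iteratedFDeriv ℝ (s - 1) v) 2 (volume.restrict (TorusDomain d)) +
                 eLpNorm v ⊤ (volume.restrict (TorusDomain d)) *
                   eLpNorm (iteratedFDeriv ℝ s u) 2 (volume.restrict (TorusDomain d))) := by
  obtain ⟨c, hc_pos, hc_top, hc⟩ := moser_commutator_estimate_general s d hs hd
  exact ⟨c, hc_pos, hc_top, fun u v hu hv ↦ hc u v (hu.of_le (mod_cast le_top))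
    (hv.of_le (mod_cast le_top))⟩
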